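/- Let n be a natural number and let a be a complex number such that (2a)_k ≠ 0 for all 0 ≤ k ≤ 2n and (a+1/2)_n ≠ 0. Then the terminating Gauss sum Σ_{k=0}^{2n} (−2n)_k (a)_k 2^k / ((2a)_k k!) equals (1/2)_n / (a+1/2)_n. -/

import Mathlib

/-- The Pochhammer symbol `(a)_k = a (a+1) ⋯ (a+k-1)`. -/
noncomputable def poch (a : ℂ) (k : ℕ) : ℂ := Polynomial.eval a (ascPochhammer ℂ k)

noncomputable def cc (a : ℂ) (k : ℕ) : ℂ := poch a k * (-2) ^ k / poch (2 * a) k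

lemma poch_zero' (a : ℂ) : poch a 0 = 1 := by simp [poch]

lemma poch_succ' (a : ℂ) (k : ℕ) : poch a (k + 1) = poch a k * (a + k) := by
  simp [poch, ascPochhammer_succ_right]

lemma poch_neg' (m k : ℕ) :
    poch (-(m : ℂ)) k = (-1) ^ k * ((Nat.factorial k : ℂ) * (m.choose k : ℂ)) := by
  rw [poch, ascPochhammer_eval_neg_eq_descPochhammer, descPochhammer_eval_eq_descFactorial,
    Nat.descFactorial_eq_factorial_mul_choose]
  push_cast
  rfl

lemma poch_ne_of_le (a : ℂ) (N : ℕ) (h : poch a N ≠ 0) : ∀ k ≤ N, poch a k ≠ 0 := by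
  induction N with
  | zero => intro k hk; obtain rfl : k = 0 := by omega
            exact h
  | succ N ih =>
    intro k hk
    rcases Nat.lt_or_ge N k with h1 | h1
    · obtain rfl : k = N + 1 := by omega
      exact h
    · rw [poch_succ'] at h
      exact ih (left_ne_zero_of_mul h) k h1

lemma cc_rec (a : ℂ) (k : ℕ) (h : poch (2 * a) (k + 1) ≠ 0) :
    2 * (a + k) * cc a k = -(2 * a + k) * cc a (k + 1) := by
  rw [poch_succ'] at h
  have h1 := left_ne_zero_of_mul h
  have h2 := right_ne_zero_of_mul h
  simp only [cc, poch_succ']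
  field_simp
  ring

lemma choose_id (p K : ℕ) :
    ((p : ℂ) + 1) * ((p + 2).choose (K + 1) : ℂ) - (p + 1) * (p.choose (K + 1) : ℂ)
      = 2 * (K + 1) * ((p + 1).choose (K + 1) : ℂ) + K * ((p + 1).choose K : ℂ) := by
  have e1 : ((p : ℂ) + 1) * (p.choose K : ℂ) = ((p + 1).choose (K + 1) : ℂ) * (K + 1) := by
    exact_mod_cast Nat.add_one_mul_choose_eq p K
  have e2 : ((p + 2).choose (K + 1) : ℂ) = (p + 1).choose K + (p + 1).choose (K + 1) := by
    exact_mod_cast Nat.choose_succ_succ (p + 1) K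
  have e3 : ((p + 1).choose (K + 1) : ℂ) = p.choose K + p.choose (K + 1) := by
    exact_mod_cast Nat.choose_succ_succ p K
  have e4 : ((p : ℂ) + 1) * ((p + 1).choose K : ℂ)
      = (p + 1) * p.choose K + K * ((p + 1).choose K : ℂ) := by
    cases K with
    | zero => simp
    | succ J =>
      have e5 : ((p : ℂ) + 1) * (p.choose J : ℂ) = ((p + 1).choose (J + 1) : ℂ) * (J + 1) := by
        exact_mod_cast Nat.add_one_mul_choose_eq p J
      have e6 : ((p + 1).choose (J + 1) : ℂ) = p.choose J + p.choose (J + 1) := by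
        exact_mod_cast Nat.choose_succ_succ p J
      push_cast
      linear_combination ((p : ℂ) + 1) * e6 + e5
  linear_combination ((p : ℂ) + 1) * e2 + e4 + 2 * e1 + ((p : ℂ) + 1) * e3

lemma partial_sum (a : ℂ) (p : ℕ) (h : poch (2 * a) (p + 2) ≠ 0) (K : ℕ) (hK : K ≤ p + 2) :
    ∑ k ∈ Finset.range (K + 1), ((2 * a + p + 1) * ((p + 2).choose k : ℂ)
      - (p + 1) * (p.choose k : ℂ)) * cc a k = 2 * (a + K) * ((p + 1).choose K : ℂ) * cc a K := by
  induction K with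
  | zero => simp
  | succ K ih =>
    rw [Finset.sum_range_succ, ih (by omega)]
    have r := cc_rec a K (poch_ne_of_le _ _ h _ hK)
    have e := choose_id p K
    have e2 : ((p + 2).choose (K + 1) : ℂ) = (p + 1).choose K + (p + 1).choose (K + 1) := by
      exact_mod_cast Nat.choose_succ_succ (p + 1) K
    push_cast
    linear_combination ((p + 1).choose K : ℂ) * r + cc a (K + 1) * e + 2 * a * cc a (K + 1) * e2

lemma F_rec (a : ℂ) (p : ℕ) (h : poch (2 * a) (p + 2) ≠ 0) :
    (2 * a + p + 1) * ∑ k ∈ Finset.range (p + 2 + 1), ((p + 2).choose k : ℂ) * cc a k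
      = (p + 1) * ∑ k ∈ Finset.range (p + 1), (p.choose k : ℂ) * cc a k := by
  have s := partial_sum a p h (p + 2) le_rfl
  have e : ∑ k ∈ Finset.range (p + 1), (p.choose k : ℂ) * cc a k
      = ∑ k ∈ Finset.range (p + 2 + 1), (p.choose k : ℂ) * cc a k := by
    rw [Finset.sum_range_succ _ (p + 2), Finset.sum_range_succ _ (p + 1)]
    simp [Nat.choose_eq_zero_of_lt]
  rw [e, ← sub_eq_zero, Finset.mul_sum, Finset.mul_sum, ← Finset.sum_sub_distrib]
  rw [Nat.choose_eq_zero_of_lt (by omega : p + 1 < p + 2)] at s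
  simp only [Nat.cast_zero, mul_zero, zero_mul] at s
  rw [← s]
  exact Finset.sum_congr rfl fun k _ => by ring

lemma F_val (a : ℂ) (n : ℕ) (h : poch (2 * a) (2 * n) ≠ 0) (ha : poch (a + 1 / 2) n ≠ 0) :
    ∑ k ∈ Finset.range (2 * n + 1), ((2 * n).choose k : ℂ) * cc a k
      = poch (1 / 2) n / poch (a + 1 / 2) n := by
  induction n with
  | zero => simp [cc, poch_zero']
  | succ n ih =>
    have r := F_rec a (2 * n) h
    rw [poch_succ'] at ha
    have h1 := left_ne_zero_of_mul ha
    have h2 := right_ne_zero_of_mul ha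
    rw [ih (poch_ne_of_le _ _ h _ (by omega)) h1] at r
    rw [show 2 * (n + 1) = 2 * n + 2 by ring, poch_succ', poch_succ', eq_div_iff ha]
    have r2 : (poch (1 / 2) n / poch (a + 1 / 2) n) * poch (a + 1 / 2) n = poch (1 / 2) n :=
      div_mul_cancel₀ _ h1
    push_cast at r ⊢
    linear_combination (poch (a + 1 / 2) n / 2) * r + (n + 1 / 2) * r2

/-- Terminating Gauss sum (even case): `₂F₁(-2n, a; 2a; 2) = (1/2)_n / (a+1/2)_n`. -/
theorem terminating_2F1_even
    (n : ℕ) (a : ℂ)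
    (h2a : ∀ k ≤ 2 * n, poch (2 * a) k ≠ 0)
    (ha : poch (a + 1 / 2) n ≠ 0) :
    ∑ k ∈ Finset.range (2 * n + 1),
        poch (-((2 * n : ℕ) : ℂ)) k * poch a k * 2 ^ k /
          (poch (2 * a) k * (Nat.factorial k : ℂ))
      = poch (1 / 2) n / poch (a + 1 / 2) n := by
  rw [← F_val a n (h2a _ le_rfl) ha]
  refine Finset.sum_congr rfl fun k hk => ?_
  have h1 := h2a k (by have := Finset.mem_range.mp hk; omega)
  have h3 : (Nat.factorial k : ℂ) ≠ 0 := by exact_mod_cast Nat.factorial_ne_zero k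
  rw [poch_neg', cc, show (-2 : ℂ) = (-1) * 2 by norm_num, mul_pow]
  field_simp
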